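/- Let π' be the twin policy of a weak unichain policy for 𝔅_n. Then every improving switch for π' in 𝔇_n is of the form (x_{v,w}, y_{v,w}) for some edge (v,w) of 𝔅_n. -/

import Mathlib

/-! ## The Markov decision process `𝔅_n` -/

/-- Vertices of the MDP `𝔅_n`: a transportation vertex `t`, a sink `s`, a dummy vertex `d`,
and vertices `a i`, `b i` for `i ∈ {1,…,n}`. -/
inductive BV : Type where
  | t : BV
  | s : BV
  | d : BV
  | a : ℕ → BV
  | b : ℕ → BV
deriving DecidableEq

/-- The vertex `a i` for `i ∈ {1,…,n+1}`, with the convention `a (n+1) = s`. -/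
def aN (n i : ℕ) : BV := if i = n + 1 then BV.s else BV.a i

/-- The vertex `b i` for `i ∈ {1,…,n+1}`, with the convention `b (n+1) = d`. -/
def bN (n i : ℕ) : BV := if i = n + 1 then BV.d else BV.b i

/-- The vertex set of `𝔅_n`. -/
def IsBVertex (n : ℕ) : BV → Prop
  | BV.t => True
  | BV.s => True
  | BV.d => True
  | BV.a i => 1 ≤ i ∧ i ≤ n
  | BV.b i => 1 ≤ i ∧ i ≤ n

/-- The edge relation of `𝔅_n`: travel, enter, skip, board, stay, leave edges,
the edge `(d,s)` and the self-loop `(s,s)`. -/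
def BEdge (n : ℕ) (u v : BV) : Prop :=
  (∃ i, 1 ≤ i ∧ i ≤ n ∧ u = BV.t ∧ v = BV.a i) ∨
  (∃ i, 1 ≤ i ∧ i ≤ n ∧ u = BV.a i ∧ v = BV.b i) ∨
  (∃ i, 1 ≤ i ∧ i ≤ n ∧ u = BV.a i ∧ v = aN n (i + 1)) ∨
  (∃ i, 1 ≤ i ∧ i ≤ n ∧ u = BV.a i ∧ v = BV.t) ∨
  (∃ i, 1 ≤ i ∧ i ≤ n ∧ u = BV.b i ∧ v = bN n (i + 1)) ∨
  (∃ i, 1 ≤ i ∧ i ≤ n ∧ u = BV.b i ∧ v = aN n (i + 1)) ∨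
  (u = BV.d ∧ v = BV.s) ∨ (u = BV.s ∧ v = BV.s)

/-- The reward function of `𝔅_n`: `r(enter i) = 2^i`, `r(stay i) = 3/4`,
`r(board i) = -2^i + 5/4`, and reward `0` on all other edges. -/
def rB (n : ℕ) (u v : BV) : ℚ :=
  match u, v with
  | BV.a i, BV.b j => if i = j then 2 ^ i else 0
  | BV.a i, BV.t => -(2 ^ i) + 5 / 4
  | BV.b i, BV.b j => if j = i + 1 then 3 / 4 else 0
  | BV.b i, BV.d => if i = n then 3 / 4 else 0
  | _, _ => 0

/-- A policy for `𝔅_n` chooses an outgoing edge at every vertex. -/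
def IsBPolicy (n : ℕ) (π : BV → BV) : Prop := ∀ u, IsBVertex n u → BEdge n u (π u)

/-- A policy is weak unichain if it reaches the sink `s` from every vertex. -/
def BWeakUnichain (n : ℕ) (π : BV → BV) : Prop :=
  ∀ u, IsBVertex n u → ∃ k, π^[k] u = BV.s

open Classical in
/-- The value of a vertex `v` w.r.t. a (weak unichain) policy `π`:
the sum of the rewards along the path that `π` takes from `v` to the sink `s`. -/
noncomputable def BVal (n : ℕ) (π : BV → BV) (v : BV) : ℚ :=
  if h : ∃ k, π^[k] v = BV.s then
    ∑ i ∈ Finset.range (Nat.find h), rB n (π^[i] v) (π^[i + 1] v)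
  else 0

/-- The reduced costs of the edge `(u,v)` w.r.t. the policy `π`. -/
noncomputable def zB (n : ℕ) (π : BV → BV) (u v : BV) : ℚ :=
  rB n u v + BVal n π v - BVal n π u

/-- The edge `(u,v)` is an improving switch for `π` if its reduced costs are positive. -/
def BImproving (n : ℕ) (π : BV → BV) (u v : BV) : Prop :=
  BEdge n u v ∧ 0 < zB n π u v

/-- The Bland numbering `𝒩_{𝔅_n}` of the edges of `𝔅_n`. -/
def NB (n : ℕ) (u v : BV) : ℕ :=
  match u, v with
  | BV.t, BV.a i => i
  | BV.a i, BV.b _ => n + 1 + 5 * (i - 1)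
  | BV.a i, BV.a _ => n + 2 + 5 * (i - 1)
  | BV.a i, BV.s => n + 2 + 5 * (i - 1)
  | BV.a i, BV.t => n + 3 + 5 * (i - 1)
  | BV.b i, BV.b _ => n + 4 + 5 * (i - 1)
  | BV.b i, BV.d => n + 4 + 5 * (i - 1)
  | BV.b i, BV.a _ => n + 5 + 5 * (i - 1)
  | BV.b i, BV.s => n + 5 + 5 * (i - 1)
  | BV.d, BV.s => 6 * n + 1
  | BV.s, BV.s => 6 * n + 2
  | _, _ => 0

/-- One step of Bland's policy iteration with edge numbering `N`:
apply the improving switch with the smallest number. -/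
def IsBlandStep (n : ℕ) (N : BV → BV → ℕ) (π π' : BV → BV) : Prop :=
  ∃ u v, BImproving n π u v ∧ (∀ u' v', BImproving n π u' v' → N u v ≤ N u' v') ∧
    π' = Function.update π u v

/-- `BlandReaches n N π ψ` says that Bland's policy iteration started at `π` visits `ψ`. -/
def BlandReaches (n : ℕ) (N : BV → BV → ℕ) : (BV → BV) → (BV → BV) → Prop :=
  Relation.ReflTransGen (IsBlandStep n N)

/-- The canonical policy `π_0` for `0`: `travel 1`, `skip i` and `leave i` are active. -/
def pi0 (n : ℕ) : BV → BV := fun u =>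
  match u with
  | BV.t => BV.a 1
  | BV.a i => aN n (i + 1)
  | BV.b i => aN n (i + 1)
  | BV.d => BV.s
  | BV.s => BV.s

/-- The optimal policy `π_*`: `travel 1`, `enter i` for all `i`, `leave j` for `j < n`,
and `stay n` are active. -/
def piStar (n : ℕ) : BV → BV := fun u =>
  match u with
  | BV.t => BV.a 1
  | BV.a i => BV.b i
  | BV.b i => if i = n then BV.d else BV.a (i + 1)
  | BV.d => BV.s
  | BV.s => BV.s

/-! ## Bits and canonical policies -/

/-- The least significant set bit `ℓ_1(x)` (1-based). -/
noncomputable def lsb (x : ℕ) : ℕ := sInf {i | 1 ≤ i ∧ Nat.testBit x (i - 1)}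

/-- The most significant set bit `m(x)` (1-based). -/
noncomputable def msb1 (x : ℕ) : ℕ := sSup {i | 1 ≤ i ∧ Nat.testBit x (i - 1)}

/-- The least unset bit `ℓ_0(x)` (1-based). -/
noncomputable def lzero (x : ℕ) : ℕ := sInf {i | 1 ≤ i ∧ ¬ Nat.testBit x (i - 1)}

/-- `L_i(x) = max { j ≤ i-2 | x_j = 1 or j = 1 }` (1-based bits). -/
noncomputable def Lfun (i x : ℕ) : ℕ :=
  sSup {j | 1 ≤ j ∧ j ≤ i - 2 ∧ (Nat.testBit x (j - 1) ∨ j = 1)}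

/-- `IsCanonical n x π` says that `π` is the canonical policy `π_x` for `x`. -/
noncomputable def IsCanonical (n x : ℕ) (π : BV → BV) : Prop :=
  IsBPolicy n π ∧
  if x = 0 then
    π BV.t = BV.a 1 ∧
      ∀ i, 1 ≤ i → i ≤ n → π (BV.a i) = aN n (i + 1) ∧ π (BV.b i) = aN n (i + 1)
  else
    π BV.t = BV.a (lsb x) ∧
    π (BV.b (msb1 x)) = aN n (msb1 x + 1) ∧
    (∀ i, msb1 x < i → i ≤ n → π (BV.a i) = aN n (i + 1) ∧ π (BV.b i) = aN n (i + 1)) ∧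
    ∀ i, 1 ≤ i → i ≤ n → Nat.testBit x (i - 1) →
      π (BV.a i) = BV.b i ∧
      (i = 2 → π (BV.b 1) = BV.a 2 ∧ (¬ Nat.testBit x 0 → π (BV.a 1) = BV.a 2)) ∧
      (3 ≤ i → Nat.testBit x (i - 2) → π (BV.b (i - 1)) = BV.a i) ∧
      (3 ≤ i → ¬ Nat.testBit x (i - 2) →
        π (BV.b (i - 1)) = BV.b i ∧ π (BV.a (i - 1)) = BV.a i ∧
        π (BV.b (i - 2)) = BV.a (i - 1) ∧
        (Lfun i x < i - 2 →
          ∀ j, Lfun i x + 1 ≤ j → j ≤ i - 2 →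
            π (BV.a j) = BV.t ∧ π (BV.b (j - 1)) = BV.b j) ∧
        (Lfun i x = 1 → ¬ Nat.testBit x 0 → π (BV.a 1) = BV.t))

/-- Activating a list of edges in a policy, from left to right. -/
def activateList (π : BV → BV) (L : List (BV × BV)) : BV → BV :=
  L.foldl (fun σ e => Function.update σ e.1 e.2) π

/-- The canonical phases w.r.t. an odd number `x` (with `ℓ := ℓ_0(x)`), as a list of edges
to be activated in order. -/
noncomputable def phaseList (n x : ℕ) : List (BV × BV) :=
  let ℓ := lzero x
  (if Nat.testBit x ℓ then [(BV.b ℓ, aN n (ℓ + 1))] else []) ++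
  (if Nat.testBit x ℓ ∨ msb1 x < ℓ then [(BV.b (ℓ - 1), BV.b ℓ)] else []) ++
  [(BV.a ℓ, BV.b ℓ), (BV.t, BV.a ℓ)] ++
  ((List.range (ℓ - 2)).map fun j => (BV.a (j + 1), BV.t)) ++
  [(BV.a (ℓ - 1), BV.a ℓ)] ++
  (((List.range (ℓ - 3)).reverse).map fun j => (BV.b (j + 1), BV.b (j + 2))) ++
  (if ℓ = 2 then [(BV.b 1, BV.a 2)] else [])

/-! ## The Markov decision process `𝔇_n` -/

/-- Vertices of `𝔇_n`: the original vertices (`base`), and for every edge `(v,w)` of `𝔅_n`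
other than the self-loop, the gadget vertices `x v w`, `y v w`, `z v w`. -/
inductive DV : Type where
  | base : BV → DV
  | x : BV → BV → DV
  | y : BV → BV → DV
  | z : BV → BV → DV
deriving DecidableEq

/-- The edges of `𝔅_n` that get replaced by gadgets (all edges except the self-loop `(s,s)`). -/
def DEdgePair (n : ℕ) (v w : BV) : Prop := BEdge n v w ∧ v ≠ BV.s

/-- The vertex set of `𝔇_n`. -/
def IsDVertex (n : ℕ) : DV → Prop
  | DV.base v => IsBVertex n v
  | DV.x v w => DEdgePair n v w
  | DV.y v w => DEdgePair n v w
  | DV.z v w => DEdgePair n v w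

/-- The agent vertices of `𝔇_n` (all vertices except the randomization vertices `y v w`). -/
def IsDAgent (n : ℕ) : DV → Prop
  | DV.base v => IsBVertex n v
  | DV.x v w => DEdgePair n v w
  | DV.y _ _ => False
  | DV.z v w => DEdgePair n v w

/-- The agent edges of `𝔇_n`. -/
def DEdge (n : ℕ) (u u' : DV) : Prop :=
  (∃ v w, DEdgePair n v w ∧
    ((u = DV.base v ∧ u' = DV.x v w) ∨ (u = DV.x v w ∧ u' = DV.base v) ∨
     (u = DV.x v w ∧ u' = DV.y v w) ∨ (u = DV.z v w ∧ u' = DV.base w))) ∨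
  (u = DV.base BV.s ∧ u' = DV.base BV.s)

/-- The reward function of `𝔇_n`: the edge `(z v w, w)` carries the reward of the original
edge `(v,w)`; all other agent edges have reward `0`. -/
def rD (n : ℕ) (u u' : DV) : ℚ :=
  match u, u' with
  | DV.z v w, DV.base w' => if w' = w then rB n v w else 0
  | _, _ => 0

/-- A policy for `𝔇_n` chooses an outgoing agent edge at every agent vertex. -/
def IsDPolicy (n : ℕ) (π : DV → DV) : Prop := ∀ u, IsDAgent n u → DEdge n u (π u)

/-- `IsDVal n p π V` says that `V` satisfies the Bellman equations characterizing the value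
function of the policy `π` for `𝔇_n` with probabilities `p`, with `V s = 0`. -/
def IsDVal (n : ℕ) (p : BV → ℚ) (π : DV → DV) (V : DV → ℚ) : Prop :=
  V (DV.base BV.s) = 0 ∧
  (∀ u, IsDAgent n u → V u = rD n u (π u) + V (π u)) ∧
  (∀ v w, DEdgePair n v w →
    V (DV.y v w) = p v * V (DV.z v w) + (1 - p v) * V (DV.base v))

open Classical in
/-- The value function of a (weak unichain) policy `π` for `𝔇_n`: the unique solution of the
Bellman equations (normalized to `0` outside the vertex set). -/
noncomputable def DVal (n : ℕ) (p : BV → ℚ) (π : DV → DV) : DV → ℚ :=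
  if h : ∃! V : DV → ℚ, IsDVal n p π V ∧ ∀ u, ¬ IsDVertex n u → V u = 0 then
    h.exists.choose
  else fun _ => 0

/-- The reduced costs of an agent edge `(u,u')` of `𝔇_n` w.r.t. the policy `π`. -/
noncomputable def zD (n : ℕ) (p : BV → ℚ) (π : DV → DV) (u u' : DV) : ℚ :=
  rD n u u' + DVal n p π u' - DVal n p π u

/-- An agent edge of `𝔇_n` is an improving switch if its reduced costs are positive. -/
def DImproving (n : ℕ) (p : BV → ℚ) (π : DV → DV) (u u' : DV) : Prop :=
  DEdge n u u' ∧ 0 < zD n p π u u'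

/-- One (agent or positive-probability randomization) step of the process `𝔇_n` under `π`. -/
def DStep (n : ℕ) (p : BV → ℚ) (π : DV → DV) (u u' : DV) : Prop :=
  (IsDAgent n u ∧ u' = π u) ∨
  (∃ v w, DEdgePair n v w ∧ u = DV.y v w ∧
    ((u' = DV.z v w ∧ 0 < p v) ∨ (u' = DV.base v ∧ 0 < 1 - p v)))

/-- A policy for `𝔇_n` is weak unichain if it reaches `s` with probability one from every
vertex, i.e. `s` is reachable via active/positive-probability steps from every vertex. -/
def DWeakUnichain (n : ℕ) (p : BV → ℚ) (π : DV → DV) : Prop :=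
  ∀ u, IsDVertex n u → Relation.ReflTransGen (DStep n p π) u (DV.base BV.s)

/-- The twin policy of a policy `π` for `𝔅_n`: every vertex `v ≠ s` is `π v`-oriented. -/
def twin (π : BV → BV) : DV → DV := fun u =>
  match u with
  | DV.base v => if v = BV.s then DV.base BV.s else DV.x v (π v)
  | DV.x v w => if w = π v then DV.y v w else DV.base v
  | DV.y v w => DV.y v w
  | DV.z _ w => DV.base w

/-- The vertex numbering `𝒩_V` of `𝔅_n`: the order `(t, a 1, b 1, a 2, b 2, …, a n, b n, d, s)`. -/
def NV (n : ℕ) : BV → ℕ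
  | BV.t => 1
  | BV.a i => 2 * i
  | BV.b i => 2 * i + 1
  | BV.d => 2 * n + 2
  | BV.s => 2 * n + 3

/-- The specific probabilities `p_v = 2^{-𝒩_V(v)·(n+5)}`. -/
noncomputable def pSpec (n : ℕ) (v : BV) : ℚ := (2 : ℚ) ^ (-((NV n v * (n + 5) : ℕ) : ℤ))

/-- The set `B(v)` of agent edges of `𝔇_n` belonging to the vertex `v`. -/
def Belongs (n : ℕ) (v : BV) (e : DV × DV) : Prop :=
  ∃ w, DEdgePair n v w ∧
    (e = (DV.x v w, DV.y v w) ∨ e = (DV.base v, DV.x v w) ∨ e = (DV.x v w, DV.base v))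

/-- Applying the improving switch `e` to the policy `π` yields `π'`. -/
def DApply (n : ℕ) (p : BV → ℚ) (π : DV → DV) (e : DV × DV) (π' : DV → DV) : Prop :=
  DImproving n p π e.1 e.2 ∧ π' = Function.update π e.1 e.2

/-- One step of Bland's policy iteration on `𝔇_n` with edge numbering `N`. -/
def IsBlandStepD (n : ℕ) (p : BV → ℚ) (N : DV → DV → ℕ) (π π' : DV → DV) : Prop :=
  ∃ u u', DImproving n p π u u' ∧ (∀ a b, DImproving n p π a b → N u u' ≤ N a b) ∧
    π' = Function.update π u u'

/-- One step of Dantzig's policy iteration on `𝔇_n`: apply an improving switch of maximal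
reduced costs. -/
def DantzigStep (n : ℕ) (p : BV → ℚ) (π π' : DV → DV) : Prop :=
  ∃ u u', DImproving n p π u u' ∧
    (∀ a b, DImproving n p π a b → zD n p π a b ≤ zD n p π u u') ∧
    π' = Function.update π u u'

/-- The finite set of vertices of `𝔅_n`, as a `Finset`. -/
noncomputable def BVSet (n : ℕ) : Finset BV :=
  {BV.t, BV.d, BV.s} ∪ (Finset.Icc 1 n).image BV.a ∪ (Finset.Icc 1 n).image BV.b

/-- The finite set of agent vertices of `𝔇_n`, as a `Finset`. -/
noncomputable def DAgentSet (n : ℕ) : Finset DV := by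
  classical
  exact ((BVSet n).image DV.base) ∪
    (((BVSet n ×ˢ BVSet n).filter fun e => DEdgePair n e.1 e.2).image fun e => DV.x e.1 e.2) ∪
    (((BVSet n ×ˢ BVSet n).filter fun e => DEdgePair n e.1 e.2).image fun e => DV.z e.1 e.2)

/-- The objective of the Largest Increase rule: the sum of the values of all agent vertices. -/
noncomputable def LIobj (n : ℕ) (p : BV → ℚ) (π : DV → DV) : ℚ :=
  ∑ u ∈ DAgentSet n, DVal n p π u

/-- One step of the Largest Increase policy iteration on `𝔇_n`: apply an improving switch
maximizing the sum of all agent vertex values of the resulting policy. -/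
def LIStep (n : ℕ) (p : BV → ℚ) (π π' : DV → DV) : Prop :=
  ∃ u u', DImproving n p π u u' ∧
    (∀ a b, DImproving n p π a b →
      LIobj n p (Function.update π a b) ≤ LIobj n p (Function.update π u u')) ∧
    π' = Function.update π u u'

/-- `N` is a Bland numbering `𝒩_{𝔇_n}` for `𝔇_n`: it is injective on agent edges, the edges
`(x v w, v)` all come first, within each gadget `(x v w, y v w)` precedes `(v, x v w)`,
the gadget blocks are ordered according to `𝒩_{𝔅_n}`, and the self-loop comes last. -/
def IsDBlandNumbering (n : ℕ) (N : DV → DV → ℕ) : Prop :=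
  (∀ u₁ u₂ u₁' u₂', DEdge n u₁ u₂ → DEdge n u₁' u₂' → N u₁ u₂ = N u₁' u₂' →
    u₁ = u₁' ∧ u₂ = u₂') ∧
  (∀ v w v' w', DEdgePair n v w → DEdgePair n v' w' →
    N (DV.x v w) (DV.base v) < N (DV.x v' w') (DV.y v' w')) ∧
  (∀ v w, DEdgePair n v w → N (DV.x v w) (DV.y v w) < N (DV.base v) (DV.x v w)) ∧
  (∀ v w v' w', DEdgePair n v w → DEdgePair n v' w' → NB n v w < NB n v' w' →
    N (DV.base v) (DV.x v w) < N (DV.x v' w') (DV.y v' w')) ∧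
  (∀ v w, DEdgePair n v w → N (DV.base v) (DV.x v w) < N (DV.base BV.s) (DV.base BV.s))
/-- Endpoints of edges of `𝔅_n` are vertices. -/
lemma BEdge.isBVertex {n : ℕ} {u v : BV} (h : BEdge n u v) : IsBVertex n u ∧ IsBVertex n v := by
  rcases h with ⟨i, h1, h2, rfl, rfl⟩ | ⟨i, h1, h2, rfl, rfl⟩ | ⟨i, h1, h2, rfl, rfl⟩ |
    ⟨i, h1, h2, rfl, rfl⟩ | ⟨i, h1, h2, rfl, rfl⟩ | ⟨i, h1, h2, rfl, rfl⟩ | ⟨rfl, rfl⟩ |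
    ⟨rfl, rfl⟩
  all_goals
    simp only [IsBVertex, aN, bN, true_and, and_true]
    try split_ifs
    all_goals try simp only [IsBVertex, true_and, and_true]
    all_goals try trivial
    all_goals omega

lemma BVal_s (n : ℕ) (π : BV → BV) : BVal n π BV.s = 0 := by
  classical
  have h : ∃ k, π^[k] BV.s = BV.s := ⟨0, rfl⟩
  have h0 : Nat.find h = 0 := by rw [Nat.find_eq_zero]; rfl
  unfold BVal
  rw [dif_pos h]
  convert Finset.sum_range_zero _

lemma BVal_step (n : ℕ) (π : BV → BV) (v : BV) (hv : v ≠ BV.s)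
    (h : ∃ k, π^[k] v = BV.s) : BVal n π v = rB n v (π v) + BVal n π (π v) := by
  classical
  have h' : ∃ k, π^[k] (π v) = BV.s := by
    obtain ⟨k, hk⟩ := h
    cases k with
    | zero => exact absurd hk hv
    | succ k => exact ⟨k, by simpa [Function.iterate_succ_apply] using hk⟩
  have hf : Nat.find h = Nat.find h' + 1 := by
    rw [Nat.find_eq_iff]
    refine ⟨by simpa [Function.iterate_succ_apply] using Nat.find_spec h', ?_⟩
    intro m hm
    cases m with
    | zero => exact hv
    | succ m =>
      have := Nat.find_min h' (m := m) (by omega)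
      simpa [Function.iterate_succ_apply] using this
  have e1 : BVal n π v = ∑ i ∈ Finset.range (Nat.find h), rB n (π^[i] v) (π^[i + 1] v) := by
    unfold BVal
    rw [dif_pos h]
  have e2 : BVal n π (π v) =
      ∑ i ∈ Finset.range (Nat.find h'), rB n (π^[i] (π v)) (π^[i + 1] (π v)) := by
    unfold BVal
    rw [dif_pos h']
  rw [e1, e2, hf, Finset.sum_range_succ', add_comm]
  rfl

/-- Consequence of the Bellman equations at a vertex of `𝔅_n`. -/
lemma IsDVal.base_step {n : ℕ} {p : BV → ℚ} {π : BV → BV} {V : DV → ℚ}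
    (hp : ∀ v, IsBVertex n v → v ≠ BV.s → 0 < p v ∧ p v ≤ 1)
    (hπ : IsBPolicy n π) (hV : IsDVal n p (twin π) V) {v : BV} (hv : IsBVertex n v)
    (hs : v ≠ BV.s) : V (DV.base v) = rB n v (π v) + V (DV.base (π v)) := by
  obtain ⟨-, h2, h3⟩ := hV
  have he : DEdgePair n v (π v) := ⟨hπ v hv, hs⟩
  have a1 := h2 (DV.base v) hv
  have a2 := h2 (DV.x v (π v)) he
  have a3 := h2 (DV.z v (π v)) he
  have a4 := h3 v (π v) he
  simp only [twin, rD, if_neg hs, if_true, zero_add] at a1 a2 a3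
  have hpv := (hp v hv hs).1
  have : p v * (V (DV.base v) - (rB n v (π v) + V (DV.base (π v)))) = 0 := by
    rw [← a3]; linear_combination a1 + a2 + a4
  rcases mul_eq_zero.mp this with h | h
  · exact absurd h hpv.ne'
  · linarith

lemma IsDVal.base_eq {n : ℕ} {p : BV → ℚ} {π : BV → BV} {V W : DV → ℚ}
    (hp : ∀ v, IsBVertex n v → v ≠ BV.s → 0 < p v ∧ p v ≤ 1)
    (hπ : IsBPolicy n π) (hV : IsDVal n p (twin π) V) (hW : IsDVal n p (twin π) W)
    (k : ℕ) : ∀ v, IsBVertex n v → π^[k] v = BV.s → V (DV.base v) = W (DV.base v) := by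
  induction k with
  | zero => rintro v - rfl; exact hV.1.trans hW.1.symm
  | succ k ih =>
    intro v hv hk
    by_cases hs : v = BV.s
    · subst hs; exact hV.1.trans hW.1.symm
    · rw [hV.base_step hp hπ hv hs, hW.base_step hp hπ hv hs,
        ih (π v) (hπ v hv).isBVertex.2 (by simpa [Function.iterate_succ_apply] using hk)]

/-- Any solution of the Bellman equations for the twin policy is unique on the vertex set. -/
lemma IsDVal.unique {n : ℕ} {p : BV → ℚ} {π : BV → BV} {V W : DV → ℚ}
    (hp : ∀ v, IsBVertex n v → v ≠ BV.s → 0 < p v ∧ p v ≤ 1)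
    (hπ : IsBPolicy n π) (hwu : BWeakUnichain n π)
    (hV : IsDVal n p (twin π) V) (hW : IsDVal n p (twin π) W)
    (u : DV) (hu : IsDVertex n u) : V u = W u := by
  have hb : ∀ v, IsBVertex n v → V (DV.base v) = W (DV.base v) := fun v hv => by
    obtain ⟨k, hk⟩ := hwu v hv
    exact hV.base_eq hp hπ hW k v hv hk
  have hz : ∀ v w, DEdgePair n v w → V (DV.z v w) = W (DV.z v w) := fun v w h => by
    rw [hV.2.1 (DV.z v w) h, hW.2.1 (DV.z v w) h]
    simp only [twin]
    rw [hb w h.1.isBVertex.2]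
  have hy : ∀ v w, DEdgePair n v w → V (DV.y v w) = W (DV.y v w) := fun v w h => by
    rw [hV.2.2 v w h, hW.2.2 v w h, hz v w h, hb v h.1.isBVertex.1]
  cases u with
  | base v => exact hb v hu
  | z v w => exact hz v w hu
  | y v w => exact hy v w hu
  | x v w =>
    rw [hV.2.1 (DV.x v w) hu, hW.2.1 (DV.x v w) hu]
    have hu' : DEdgePair n v w := hu
    simp only [twin]
    split_ifs
    · rw [hy v w hu']
    · rw [hb v hu'.1.isBVertex.1]

/-- The explicit value function before normalization. -/
noncomputable def twinVal (n : ℕ) (p : BV → ℚ) (π : BV → BV) : DV → ℚ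
  | DV.base v => BVal n π v
  | DV.x v _ => BVal n π v
  | DV.y v w => p v * (rB n v w + BVal n π w) + (1 - p v) * BVal n π v
  | DV.z v w => rB n v w + BVal n π w

open Classical in
lemma twinVal_isDVal {n : ℕ} {p : BV → ℚ} {π : BV → BV}
    (hπ : IsBPolicy n π) (hwu : BWeakUnichain n π) :
    IsDVal n p (twin π) (fun u => if IsDVertex n u then twinVal n p π u else 0) := by
  refine ⟨?_, ?_, ?_⟩
  · simp [IsDVertex, IsBVertex, twinVal, BVal_s]
  · intro u hu
    cases u with
    | base v =>
      have hv : IsBVertex n v := hu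
      by_cases hs : v = BV.s
      · subst hs; simp [twin, rD]
      · have he : DEdgePair n v (π v) := ⟨hπ v hv, hs⟩
        simp [twin, rD, hs, IsDVertex, hv, he, twinVal]
    | x v w =>
      have he : DEdgePair n v w := hu
      have hv := he.1.isBVertex.1
      by_cases hw : w = π v
      · subst hw
        simp only [twin, rD, if_true, IsDVertex, he, twinVal]
        rw [← BVal_step n π v he.2 (hwu v hv)]
        ring
      · simp [twin, rD, hw, IsDVertex, he, hv, twinVal]
    | y v w => exact absurd hu (by simp [IsDAgent])
    | z v w =>
      have he : DEdgePair n v w := hu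
      simp [twin, rD, IsDVertex, he, he.1.isBVertex.2, twinVal]
  · intro v w he
    simp [IsDVertex, he, he.1.isBVertex.1, twinVal]

lemma DVal_twin_isDVal {n : ℕ} {p : BV → ℚ} {π : BV → BV}
    (hp : ∀ v, IsBVertex n v → v ≠ BV.s → 0 < p v ∧ p v ≤ 1)
    (hπ : IsBPolicy n π) (hwu : BWeakUnichain n π) :
    IsDVal n p (twin π) (DVal n p (twin π)) := by
  classical
  have h : ∃! V : DV → ℚ, IsDVal n p (twin π) V ∧ ∀ u, ¬ IsDVertex n u → V u = 0 := by
    have hT := twinVal_isDVal (p := p) hπ hwu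
    refine ⟨_, ⟨hT, fun u hu => by simp [hu]⟩, ?_⟩
    rintro W ⟨hW, hW0⟩
    funext u
    by_cases hu : IsDVertex n u
    · exact hW.unique hp hπ hwu hT u hu
    · simp [hu, hW0 u hu]
  unfold DVal
  rw [dif_pos h]
  exact h.exists.choose_spec.1

/-- Every improving switch for the twin policy of a weak unichain policy for `𝔅_n` is of
the form `(x v w, y v w)` for some edge `(v,w)` of `𝔅_n`. -/
theorem stmt11 (n : ℕ) (hn : 1 ≤ n) (p : BV → ℚ)
    (hp : ∀ v, IsBVertex n v → v ≠ BV.s → 0 < p v ∧ p v ≤ 1)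
    (π : BV → BV) (hπ : IsBPolicy n π) (hwu : BWeakUnichain n π)
    (u u' : DV) (himp : DImproving n p (twin π) u u') :
    ∃ v w, DEdgePair n v w ∧ u = DV.x v w ∧ u' = DV.y v w := by
  obtain ⟨hE, hz⟩ := himp
  have hV := DVal_twin_isDVal hp hπ hwu
  unfold zD at hz
  generalize DVal n p (twin π) = V at hz hV
  -- every gadget vertex `x v w` has the same value as `v`
  have hx : ∀ v w, DEdgePair n v w → V (DV.x v w) = V (DV.base v) := by
    intro v w he
    have a1 := hV.2.1 (DV.x v w) he
    have a2 := hV.2.1 (DV.base v) he.1.isBVertex.1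
    by_cases hw : w = π v
    · subst hw
      simp only [twin, rD, if_neg he.2, zero_add] at a2
      exact a2.symm
    · simpa [twin, rD, hw] using a1
  rcases hE with ⟨v, w, he, h | h | h | h⟩ | h
  · obtain ⟨rfl, rfl⟩ := h
    simp [rD, hx v w he] at hz
  · obtain ⟨rfl, rfl⟩ := h
    simp [rD, hx v w he] at hz
  · exact ⟨v, w, he, h⟩
  · obtain ⟨rfl, rfl⟩ := h
    have a3 := hV.2.1 (DV.z v w) he
    simp only [twin] at a3
    linarith
  · obtain ⟨rfl, rfl⟩ := h
    simp [rD] at hz
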